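/- Let p, q ≥ 0 with n = p + q ≥ 1, J = I_{p,q} ∈ M_n(ℝ), and 𝔤 = 𝔬(p,q) = {x ∈ M_n(ℝ) : xᵀJ + Jx = 0}. Suppose h ∈ 𝔤 is nonzero and semisimple (diagonalizable over ℂ) and x ∈ 𝔤 satisfies [h, x] = 0. Let 𝔤^h = {z ∈ 𝔤 : [z, h] = 0} be the centralizer of h and 𝔞 = {a ∈ 𝔤^h : [a, z] = 0 for all z ∈ 𝔤^h} the center of 𝔤^h. Then: (i) 𝔞 ≠ 0; (ii) the trace form B(y, z) = tr(y z) is nondegenerate on 𝔞; and (iii) tr([y, x]·a) = 0 for all y ∈ 𝔤 and a ∈ 𝔞, i.e., the subspace [𝔤, x] is contained in the B-orthogonal complement of 𝔞 in 𝔤, which is a proper subspace of 𝔤 on which B is nondegenerate. -/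

import Mathlib

/-!
The element `h` itself lies in `𝔞`, so `𝔞 ≠ 0`, and `tr ([y, x] a) = tr (y [x, a]) = 0` because
`x` lies in the centralizer of `h`. The substance is the nondegeneracy of the trace form on `𝔞`,
which needs no structure theory of reductive Lie algebras.

* If `a ∈ 𝔞` then every odd power of `a` is in `𝔞`. So if `a` is orthogonal to `𝔞`, all the
  traces `tr ((a²)ᵏ)`, `k ≥ 1`, vanish, and `a` is nilpotent
  (`isNilpotent_of_trace_pow_eq_zero`).
* A nilpotent `a ∈ 𝔞` commutes with each `z ∈ 𝔤^h`, so `a z` is nilpotent and `tr (a z) = 0`: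
  thus `a` is orthogonal to `𝔤^h`.
* The trace form is nondegenerate on `𝔤^h` (`eq_zero_of_trace_memOpq`). Averaging over the
  involution `w ↦ -J wᵀ J` reduces this to the full centralizer of `h` among real matrices, hence to
  complex ones; there, in a basis diagonalizing `h`, the centralizer is closed under
  conjugate transposition, and `tr (M Mᴴ) = 0` forces `M = 0`
  (`eq_zero_of_trace_centralizer`).

The last assertion follows from `𝔤 = 𝔞 ⊕ (𝔞^⊥ ∩ 𝔤)` and the nondegeneracy of the form on `𝔤`,
which holds because `𝔤` is closed under transposition.
-/

open Matrix

noncomputable section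

/-- The matrix `I_{p,q}`, with first `p` diagonal entries `1` and last `q` diagonal
entries `-1`. -/
def Ipq (p q : ℕ) (R : Type*) [Ring R] : Matrix (Fin (p + q)) (Fin (p + q)) R :=
  Matrix.diagonal fun i => if (i : ℕ) < p then 1 else -1

/-- Membership in the Lie algebra `𝔬(p,q)`. -/
def MemOpq (p q : ℕ) (x : Matrix (Fin (p + q)) (Fin (p + q)) ℝ) : Prop :=
  xᵀ * Ipq p q ℝ + Ipq p q ℝ * x = 0

/-- A real matrix is semisimple if it is diagonalizable over `ℂ`. -/
def IsSemisimpleMat {n : ℕ} (h : Matrix (Fin n) (Fin n) ℝ) : Prop :=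
  ∃ (P : Matrix (Fin n) (Fin n) ℂ) (d : Fin n → ℂ),
    IsUnit P.det ∧ h.map (algebraMap ℝ ℂ) = P * Matrix.diagonal d * P⁻¹

/-- Membership in `𝔞`, the center of the centralizer of `h` in `𝔬(p,q)`. -/
def MemCenterCentralizer (p q : ℕ) (h a : Matrix (Fin (p + q)) (Fin (p + q)) ℝ) : Prop :=
  MemOpq p q a ∧ a * h = h * a ∧
    ∀ z, MemOpq p q z → z * h = h * z → a * z = z * a

/-! ### Two facts on traces of matrices -/

/-- A real matrix all of whose positive powers are traceless is nilpotent.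
The projection onto its invertible Fitting component is a polynomial in the matrix without
constant term, hence a traceless idempotent, hence zero. -/
lemma isNilpotent_of_trace_pow_eq_zero {n : ℕ} (m : Matrix (Fin n) (Fin n) ℝ)
    (hm : ∀ k : ℕ, (m ^ (k + 1)).trace = 0) : IsNilpotent m := by
  obtain ⟨g, hg, hndvd⟩ := m.charpoly.exists_eq_pow_rootMultiplicity_mul_and_not_dvd
    m.charpoly_monic.ne_zero 0
  set j := m.charpoly.rootMultiplicity 0
  rw [Polynomial.C_0, sub_zero] at hg hndvd
  have hcop : IsCoprime (Polynomial.X ^ (j + 1)) g :=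
    ((Polynomial.irreducible_X.coprime_iff_not_dvd).2 hndvd).pow_left
  obtain ⟨u, v, huv⟩ := hcop
  have hch : (Polynomial.aeval m) (Polynomial.X ^ j * g) = 0 := by
    rw [← hg]; exact m.aeval_self_charpoly
  set e := Polynomial.aeval m (u * Polynomial.X ^ (j + 1)) with he
  have htr : e.trace = 0 := by
    have : e = ∑ i ∈ Finset.range (u.natDegree + 1), u.coeff i • m ^ ((i + j) + 1) := by
      rw [he, map_mul, Polynomial.aeval_eq_sum_range, Finset.sum_mul]
      refine Finset.sum_congr rfl fun i _ => ?_
      simp [pow_add, mul_assoc]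
    rw [this, Matrix.trace_sum]
    refine Finset.sum_eq_zero fun i _ => ?_
    rw [Matrix.trace_smul, hm, smul_zero]
  have hidem : e * e = e := by
    have h1 : e * (1 - e) = 0 := by
      have : (1 : Matrix (Fin n) (Fin n) ℝ) - e = Polynomial.aeval m (v * g) := by
        rw [he, sub_eq_iff_eq_add', ← map_add, huv, map_one]
      rw [this, he, ← map_mul]
      have : u * Polynomial.X ^ (j + 1) * (v * g)
          = (u * v * Polynomial.X) * (Polynomial.X ^ j * g) := by ring
      rw [this, map_mul, hch, mul_zero]
    rw [mul_sub, mul_one, sub_eq_zero] at h1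
    exact h1.symm
  have he0 : e = 0 := by
    have h1 : IsIdempotentElem (Matrix.toLin' e) := by
      rw [IsIdempotentElem, Module.End.mul_eq_comp, ← Matrix.toLin'_mul, hidem]
    have h2 := LinearMap.IsIdempotentElem.eq_zero_of_trace_eq_zero h1
      (by rw [Matrix.trace_toLin'_eq, htr])
    simpa using h2
  refine ⟨j, ?_⟩
  have h1 : Polynomial.aeval m (v * g) = 1 := by
    have := congrArg (Polynomial.aeval m) huv
    rw [map_add, ← he, he0, zero_add, map_one] at this
    exact this
  calc m ^ j = m ^ j * Polynomial.aeval m (v * g) := by rw [h1, mul_one]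
    _ = Polynomial.aeval m (v * (Polynomial.X ^ j * g)) := by
        rw [mul_left_comm, map_mul _ (Polynomial.X ^ j)]; simp
    _ = 0 := by rw [map_mul, hch, mul_zero]

open scoped ComplexOrder in
/-- The trace form is nondegenerate on the centralizer, among all real matrices, of a matrix
that is diagonalizable over `ℂ`. -/
lemma eq_zero_of_trace_centralizer {n : ℕ} {h N : Matrix (Fin n) (Fin n) ℝ}
    (hss : IsSemisimpleMat h) (hN : N * h = h * N)
    (htr : ∀ z, z * h = h * z → (N * z).trace = 0) : N = 0 := by
  obtain ⟨P, d, hP, hd⟩ := hss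
  set H := h.map (algebraMap ℝ ℂ) with hH
  set Nc := N.map (algebraMap ℝ ℂ) with hNc
  have hNH : Nc * H = H * Nc := by
    rw [hNc, hH, ← Matrix.map_mul, ← Matrix.map_mul, hN]
  have hPP : P * P⁻¹ = 1 := Matrix.mul_nonsing_inv P hP
  have hPP' : P⁻¹ * P = 1 := Matrix.nonsing_inv_mul P hP
  set M := P⁻¹ * Nc * P with hM
  have hNcM : Nc = P * M * P⁻¹ := by
    calc Nc = (P * P⁻¹) * Nc * (P * P⁻¹) := by rw [hPP, one_mul, mul_one]
      _ = P * M * P⁻¹ := by rw [hM]; simp only [mul_assoc]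
  have hD : Matrix.diagonal d = P⁻¹ * H * P := by
    calc Matrix.diagonal d = (P⁻¹ * P) * Matrix.diagonal d * (P⁻¹ * P) := by
          rw [hPP', one_mul, mul_one]
      _ = P⁻¹ * H * P := by rw [hd]; simp only [mul_assoc]
  have hMD : M * Matrix.diagonal d = Matrix.diagonal d * M := by
    calc M * Matrix.diagonal d = P⁻¹ * Nc * (P * P⁻¹) * H * P := by
          rw [hM, hD]; simp only [mul_assoc]
      _ = P⁻¹ * (Nc * H) * P := by rw [hPP]; simp only [mul_assoc, one_mul]
      _ = P⁻¹ * H * (P * P⁻¹) * Nc * P := by rw [hPP, hNH]; simp only [mul_assoc, one_mul]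
      _ = Matrix.diagonal d * M := by rw [hM, hD]; simp only [mul_assoc]
  -- Commuting with `diagonal d` only constrains which entries vanish, symmetrically in `i`, `j`.
  have hMD' : Mᴴ * Matrix.diagonal d = Matrix.diagonal d * Mᴴ := by
    ext i j
    have h1 := congrFun (congrFun hMD j) i
    simp only [Matrix.mul_diagonal, Matrix.diagonal_mul, Matrix.conjTranspose_apply] at h1 ⊢
    by_cases hij : d i = d j
    · rw [hij, mul_comm]
    · have h2 : M j i * (d i - d j) = 0 := by linear_combination h1
      have h3 : M j i = 0 := (mul_eq_zero.1 h2).resolve_right (sub_ne_zero.2 hij)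
      simp [h3]
  set Z := P * Mᴴ * P⁻¹ with hZ
  have hZH : Z * H = H * Z := by
    calc Z * H = P * Mᴴ * (P⁻¹ * P) * Matrix.diagonal d * P⁻¹ := by
          rw [hZ, hd]; simp only [mul_assoc]
      _ = P * (Mᴴ * Matrix.diagonal d) * P⁻¹ := by rw [hPP']; simp only [mul_assoc, one_mul]
      _ = P * Matrix.diagonal d * (P⁻¹ * P) * Mᴴ * P⁻¹ := by
          rw [hMD', hPP']; simp only [mul_assoc, one_mul]
      _ = H * Z := by rw [hZ, hd]; simp only [mul_assoc]
  -- As `h` is real, the real and imaginary parts of `Z` commute with it as well.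
  have hentry := fun i j => congrFun (congrFun hZH i) j
  simp only [Matrix.mul_apply, hH, Matrix.map_apply, Complex.coe_algebraMap] at hentry
  have hre : Z.map Complex.re * h = h * Z.map Complex.re := by
    ext i j
    simpa [Matrix.mul_apply] using congrArg Complex.re (hentry i j)
  have him : Z.map Complex.im * h = h * Z.map Complex.im := by
    ext i j
    simpa [Matrix.mul_apply] using congrArg Complex.im (hentry i j)
  have htrZ : (Nc * Z).trace = 0 := by
    apply Complex.ext
    · simpa [Matrix.trace, Matrix.mul_apply, hNc] using htr _ hre
    · simpa [Matrix.trace, Matrix.mul_apply, hNc] using htr _ him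
  clear_value M Z Nc
  have htrM : (M * Mᴴ).trace = 0 := by
    rw [← htrZ]
    calc (M * Mᴴ).trace = (M * Mᴴ * (P⁻¹ * P)).trace := by rw [hPP', mul_one]
      _ = (P * (M * Mᴴ * P⁻¹)).trace := by rw [Matrix.trace_mul_comm P, mul_assoc (M * Mᴴ)]
      _ = (P * M * (P⁻¹ * P) * Mᴴ * P⁻¹).trace := by rw [hPP', mul_one]; simp only [mul_assoc]
      _ = (Nc * Z).trace := by rw [hNcM, hZ]; simp only [mul_assoc]
  have hM0 : M = 0 := Matrix.trace_mul_conjTranspose_self_eq_zero_iff.1 htrM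
  have hNc0 : Nc = 0 := by rw [hNcM, hM0]; simp
  ext i j
  have := congrFun (congrFun hNc0 i) j
  simpa [hNc] using this

/-! ### The trace form on the centralizer of `h` in `𝔬(p,q)` and on its center -/

lemma Ipq_mul_self (p q : ℕ) : Ipq p q ℝ * Ipq p q ℝ = 1 := by
  rw [Ipq, Matrix.diagonal_mul_diagonal, ← Matrix.diagonal_one]
  congr 1
  ext i
  split_ifs <;> norm_num

lemma Ipq_transpose (p q : ℕ) : (Ipq p q ℝ)ᵀ = Ipq p q ℝ := Matrix.diagonal_transpose _

lemma memOpq_iff {p q : ℕ} {x : Matrix (Fin (p + q)) (Fin (p + q)) ℝ} :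
    MemOpq p q x ↔ xᵀ = -(Ipq p q ℝ * x * Ipq p q ℝ) := by
  have hJ := Ipq_mul_self p q
  rw [MemOpq]
  constructor
  · intro h
    have := congrArg (· * Ipq p q ℝ) h
    simp only [add_mul, zero_mul, mul_assoc, hJ, mul_one] at this
    rw [mul_assoc]
    exact eq_neg_of_add_eq_zero_left this
  · intro h
    rw [h, neg_mul, mul_assoc _ (Ipq p q ℝ), hJ, mul_one, neg_add_cancel]

lemma MemOpq.transpose {p q : ℕ} {x : Matrix (Fin (p + q)) (Fin (p + q)) ℝ}
    (hx : MemOpq p q x) : MemOpq p q xᵀ := by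
  have hJ := Ipq_mul_self p q
  rw [memOpq_iff] at hx ⊢
  rw [hx, Matrix.transpose_neg, Matrix.transpose_mul, Matrix.transpose_mul, Ipq_transpose, hx]
  simp only [mul_neg, neg_mul, neg_neg]
  simp only [← mul_assoc, hJ, one_mul]

/-- The trace form is nondegenerate on the centralizer of `h` in `𝔬(p,q)`. -/
lemma eq_zero_of_trace_memOpq {p q : ℕ} {h N : Matrix (Fin (p + q)) (Fin (p + q)) ℝ}
    (hhg : MemOpq p q h) (hss : IsSemisimpleMat h) (hNg : MemOpq p q N) (hN : N * h = h * N)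
    (htr : ∀ z, MemOpq p q z → z * h = h * z → (N * z).trace = 0) : N = 0 := by
  refine eq_zero_of_trace_centralizer hss hN fun z hz => ?_
  have hJ := Ipq_mul_self p q
  rw [memOpq_iff] at hhg hNg
  set J := Ipq p q ℝ with hJdef
  have hJt : Jᵀ = J := Ipq_transpose p q
  -- `w ↦ -J wᵀ J` fixes `𝔬(p,q)` pointwise and preserves the centralizer of `h`.
  have hz' : (J * zᵀ * J) * h = h * (J * zᵀ * J) := by
    have h1 : hᵀ * zᵀ = zᵀ * hᵀ := by
      rw [← Matrix.transpose_mul, hz, Matrix.transpose_mul]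
    rw [hhg] at h1
    have h2 := congrArg (fun w => J * w * J) h1
    simp only [mul_neg, neg_mul, neg_inj] at h2
    have h3 : (J * J) * h * J * zᵀ * J = J * zᵀ * J * h * (J * J) := by
      simpa only [mul_assoc] using h2
    rw [hJ, one_mul, mul_one] at h3
    rw [h3.symm]; simp only [mul_assoc]
  have hmem : MemOpq p q (z - J * zᵀ * J) := by
    rw [memOpq_iff, ← hJdef]
    simp only [Matrix.transpose_sub, Matrix.transpose_mul, Matrix.transpose_transpose, hJt]
    have : J * (z - J * zᵀ * J) * J = J * z * J - (J * J) * zᵀ * (J * J) := by noncomm_ring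
    rw [this, hJ, one_mul, mul_one]
    noncomm_ring
  have hcomm : (z - J * zᵀ * J) * h = h * (z - J * zᵀ * J) := by
    rw [sub_mul, mul_sub, hz, hz']
  have h1 := htr _ hmem hcomm
  have h2 : (N * (J * zᵀ * J)).trace = -(N * z).trace := by
    calc (N * (J * zᵀ * J)).trace = (N * J * zᵀ * J).trace := by simp only [mul_assoc]
      _ = (J * N * J * zᵀ).trace := by
          rw [Matrix.trace_mul_comm]; simp only [mul_assoc]
      _ = -(Nᵀ * zᵀ).trace := by rw [hNg, neg_mul, Matrix.trace_neg, neg_neg]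
      _ = -(N * z).trace := by
          rw [← Matrix.transpose_mul, Matrix.trace_transpose, Matrix.trace_mul_comm]
  rw [mul_sub, Matrix.trace_sub, h2] at h1
  linarith

lemma MemOpq.odd_pow {p q : ℕ} {a : Matrix (Fin (p + q)) (Fin (p + q)) ℝ}
    (ha : MemOpq p q a) (k : ℕ) : MemOpq p q (a ^ (2 * k + 1)) := by
  have hJ := Ipq_mul_self p q
  have h1 : SemiconjBy (Ipq p q ℝ) a (-aᵀ) := by
    rw [MemOpq] at ha
    rw [SemiconjBy, neg_mul]
    exact eq_neg_of_add_eq_zero_right ha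
  have h2 := (h1.pow_right (2 * k + 1)).eq
  rw [Odd.neg_pow ⟨k, rfl⟩, neg_mul] at h2
  rw [MemOpq, Matrix.transpose_pow, h2, add_neg_cancel]

/-- The trace form is nondegenerate on `𝔞`, the center of the centralizer of `h`. -/
lemma MemCenterCentralizer.eq_zero {p q : ℕ} {h a : Matrix (Fin (p + q)) (Fin (p + q)) ℝ}
    (hhg : MemOpq p q h) (hss : IsSemisimpleMat h) (ha : MemCenterCentralizer p q h a)
    (hab : ∀ b, MemCenterCentralizer p q h b → (a * b).trace = 0) : a = 0 := by
  obtain ⟨hag, hah, haz⟩ := ha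
  have hnil : IsNilpotent (a ^ 2) := by
    refine isNilpotent_of_trace_pow_eq_zero _ fun k => ?_
    have := hab (a ^ (2 * k + 1)) ⟨hag.odd_pow k, (Commute.pow_left hah _).eq,
      fun z hz hzh => (Commute.pow_left (haz z hz hzh) _).eq⟩
    rwa [← pow_succ', add_assoc, ← pow_mul] at *
  have hnila : IsNilpotent a := by
    obtain ⟨k, hk⟩ := hnil
    exact ⟨2 * k, by rw [pow_mul, hk]⟩
  refine eq_zero_of_trace_memOpq hhg hss hag hah fun z hz hzh => ?_
  have : IsNilpotent (a * z) := Commute.isNilpotent_mul_right (haz z hz hzh) hnila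
  exact (Matrix.isNilpotent_trace_of_isNilpotent this).eq_zero

/-! ### The orthogonal decomposition along `𝔞` -/

/-- The center `𝔞` of the centralizer of `h` in `𝔬(p,q)`, as a subspace of the real matrices. -/
def centerCentralizer (p q : ℕ) (h : Matrix (Fin (p + q)) (Fin (p + q)) ℝ) :
    Submodule ℝ (Matrix (Fin (p + q)) (Fin (p + q)) ℝ) where
  carrier := {a | MemCenterCentralizer p q h a}
  zero_mem' := by simp [MemCenterCentralizer, MemOpq]
  add_mem' := by
    rintro a b ⟨ha, ha', ha''⟩ ⟨hb, hb', hb''⟩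
    refine ⟨?_, by rw [add_mul, mul_add, ha', hb'], fun z hz hzh => by
      rw [add_mul, mul_add, ha'' z hz hzh, hb'' z hz hzh]⟩
    rw [MemOpq] at *
    rw [Matrix.transpose_add, add_mul, mul_add, add_add_add_comm, ha, hb, add_zero]
  smul_mem' := by
    rintro c a ⟨ha, ha', ha''⟩
    refine ⟨?_, by rw [smul_mul_assoc, mul_smul_comm, ha'], fun z hz hzh => by
      rw [smul_mul_assoc, mul_smul_comm, ha'' z hz hzh]⟩
    rw [MemOpq] at *
    rw [Matrix.transpose_smul, smul_mul_assoc, mul_smul_comm, ← smul_add, ha, smul_zero]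

/-- The trace form `(y, z) ↦ tr (y z)` on all real `n × n` matrices. -/
def matTraceForm (n : ℕ) : LinearMap.BilinForm ℝ (Matrix (Fin n) (Fin n) ℝ) :=
  (LinearMap.mul ℝ (Matrix (Fin n) (Fin n) ℝ)).compr₂ (Matrix.traceLinearMap (Fin n) ℝ ℝ)

lemma matTraceForm_apply {n : ℕ} (y z : Matrix (Fin n) (Fin n) ℝ) :
    matTraceForm n y z = (y * z).trace := rfl

lemma matTraceForm_isSymm (n : ℕ) : (matTraceForm n).IsSymm :=
  ⟨fun y z => by simp [matTraceForm_apply, Matrix.trace_mul_comm y z]⟩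

/-- For a nonzero semisimple `h ∈ 𝔬(p,q)` and `x ∈ 𝔬(p,q)` commuting with
`h`: the center `𝔞` of the centralizer of `h` is nonzero, the trace form is nondegenerate on
`𝔞`, `[𝔤, x]` is orthogonal to `𝔞`, and the trace-form orthogonal complement of `𝔞` in `𝔤`
is a proper subspace of `𝔤` on which the trace form is nondegenerate. -/
theorem multiplicity_one_stmt12 (p q : ℕ) (hn : 1 ≤ p + q)
    (h : Matrix (Fin (p + q)) (Fin (p + q)) ℝ)
    (hhg : MemOpq p q h) (hh0 : h ≠ 0) (hss : IsSemisimpleMat h)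
    (x : Matrix (Fin (p + q)) (Fin (p + q)) ℝ)
    (hxg : MemOpq p q x) (hxh : h * x - x * h = 0) :
    (∃ a, MemCenterCentralizer p q h a ∧ a ≠ 0) ∧
    (∀ a, MemCenterCentralizer p q h a →
      (∀ b, MemCenterCentralizer p q h b → (a * b).trace = 0) → a = 0) ∧
    (∀ y, MemOpq p q y → ∀ a, MemCenterCentralizer p q h a →
      ((y * x - x * y) * a).trace = 0) ∧
    (∃ z, MemOpq p q z ∧ ∃ a, MemCenterCentralizer p q h a ∧ (z * a).trace ≠ 0) ∧
    (∀ y, MemOpq p q y → (∀ a, MemCenterCentralizer p q h a → (y * a).trace = 0) →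
      (∀ z, MemOpq p q z → (∀ a, MemCenterCentralizer p q h a → (z * a).trace = 0) →
        (y * z).trace = 0) →
      y = 0) := by
  have hcommx : x * h = h * x := (sub_eq_zero.1 hxh).symm
  have hha : MemCenterCentralizer p q h h := ⟨hhg, rfl, fun z _ hz => hz.symm⟩
  have hnd : ∀ a, MemCenterCentralizer p q h a →
      (∀ b, MemCenterCentralizer p q h b → (a * b).trace = 0) → a = 0 :=
    fun a ha hab => ha.eq_zero hhg hss hab
  refine ⟨⟨h, hha, hh0⟩, hnd, ?_, ?_, ?_⟩
  · intro y _ a ha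
    have hax := ha.2.2 x hxg hcommx
    rw [sub_mul, Matrix.trace_sub, sub_eq_zero, mul_assoc, ← hax, ← mul_assoc,
      Matrix.trace_mul_comm, ← mul_assoc]
  · by_contra! hcon
    exact hh0 (hnd h hha fun b hb => hcon h hhg b hb)
  · intro y hy hyW hyperp
    set W := centerCentralizer p q h
    set B := matTraceForm (p + q)
    have hrefl : B.IsRefl := (matTraceForm_isSymm _).isRefl
    have hndW : (B.restrict W).Nondegenerate := by
      have hl : ∀ a : W, (∀ b : W, B a b = 0) → a = 0 := fun a hab =>
        Subtype.ext (hnd a a.2 fun b hb => hab ⟨b, hb⟩)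
      exact ⟨hl, fun a hab => hl a fun b => hrefl _ _ (hab b)⟩
    have hcompl := LinearMap.BilinForm.isCompl_orthogonal_of_restrict_nondegenerate hrefl hndW
    -- Decompose `yᵀ ∈ 𝔤` along `𝔞 ⊕ 𝔞^⊥`: both parts are orthogonal to `y`.
    obtain ⟨a, ha, z, hz, haz⟩ := Submodule.mem_sup.1
      (hcompl.sup_eq_top ▸ Submodule.mem_top : yᵀ ∈ W ⊔ B.orthogonal W)
    have hzg : MemOpq p q z := by
      have h1 := hy.transpose
      have h2 : MemOpq p q a := ha.1
      rw [eq_sub_of_add_eq' haz]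
      rw [MemOpq] at *
      rw [Matrix.transpose_sub, sub_mul, mul_sub, sub_add_sub_comm, h1, h2, sub_zero]
    have hyz : (y * z).trace = 0 := hyperp z hzg fun b hb => by
      rw [Matrix.trace_mul_comm]
      exact hz b hb
    have hya : (y * a).trace = 0 := hyW a ha
    have hyy : (y * yᴴ).trace = 0 := by
      rw [Matrix.conjTranspose_eq_transpose_of_trivial, ← haz, mul_add, Matrix.trace_add, hya,
        hyz, add_zero]
    exact Matrix.trace_mul_conjTranspose_self_eq_zero_iff.1 hyy
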